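/- arXiv:2601.03095 — 2 statements merged into one kernel-verified Lean document; each statement's English description precedes it below -/
import Mathlib

section
/- Assume moreover k ≥ 4, and fix j with 1 ≤ j ≤ k−3. Suppose that for each 0 ≤ i ≤ j there exists a real polynomial P_i in 2i+1 variables such that G_i(t) = q(t)·P_i(q(t), q'(t), …, q^{(2i)}(t)) for all t ∈ [0,T). Then there exists a real polynomial Q in 2j+3 variables such that the function t ↦ Q(q(t), q'(t), …, q^{(2j+2)}(t)) is differentiable on [0,T) with derivative at every t ∈ [0,T) equal to G_1(t)·G_j'''(t); that is, some primitive of G_1·G_j''' on [0,T) is a polynomial expression in q and its derivatives of order ≤ 2j+2. -/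
open Set

/-!
Write `S = [0,T)` and `H_i = G_i / q`, so that `H_i` is a polynomial in the derivatives of `q` for
`i ≤ j`, and the recursion reads `q G_{i-1}''' = -4 H_i'`. Two families of functions visibly have
differential-polynomial primitives:

* `G_a G_b''' + G_a''' G_b`, with primitive `G_a G_b'' - G_a' G_b' + G_a'' G_b`;
* `G_a''' G_b + G_{a+1} G_{b-1}'''`, which is `-4 (H_{a+1} H_b)'` by the recursion.

Subtracting, `G_a G_b''' - G_{a+1} G_{b-1}'''` has such a primitive. Telescoping from `(a,b) = (1,j)`
to `(j,1)` gives one for `G_1 G_j''' - G_j G_1'''`, and adding the first family at `(1,j)` gives one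
for `2 G_1 G_j'''`. No index above `j` is ever used, so the derivatives of `q` involved have order at
most `2j+2`.
-/

/-- On `S`, the function `f` is a real polynomial in `q, q', …, q^{(n-1)}` (`n` variables). -/
def IsDiffPoly (S : Set ℝ) (q : ℝ → ℝ) (n : ℕ) (f : ℝ → ℝ) : Prop :=
  ∃ P : MvPolynomial (Fin n) ℝ, ∀ t ∈ S,
    f t = MvPolynomial.eval (fun l : Fin n => iteratedDerivWithin (l : ℕ) q S t) P

/-- On `S`, the function `f` is the derivative of a polynomial in `q, q', …, q^{(n-1)}`. -/
def HasDiffPolyPrimitive (S : Set ℝ) (q : ℝ → ℝ) (n : ℕ) (f : ℝ → ℝ) : Prop :=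
  ∃ P : MvPolynomial (Fin n) ℝ, ∀ t ∈ S,
    HasDerivWithinAt
      (fun s => MvPolynomial.eval (fun l : Fin n => iteratedDerivWithin (l : ℕ) q S s) P)
      (f t) S t

section DiffPoly

variable {S : Set ℝ} {q : ℝ → ℝ} {n m : ℕ} {f g : ℝ → ℝ}

lemma IsDiffPoly.mono (hf : IsDiffPoly S q n f) (h : n ≤ m) : IsDiffPoly S q m f := by
  obtain ⟨P, hP⟩ := hf
  refine ⟨MvPolynomial.rename (Fin.castLE h) P, fun t ht => ?_⟩
  rw [hP t ht, MvPolynomial.eval_rename]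
  rfl

lemma IsDiffPoly.congr (hf : IsDiffPoly S q n f) (h : ∀ t ∈ S, g t = f t) :
    IsDiffPoly S q n g := by
  obtain ⟨P, hP⟩ := hf
  exact ⟨P, fun t ht => (h t ht).trans (hP t ht)⟩

lemma IsDiffPoly.add (hf : IsDiffPoly S q n f) (hg : IsDiffPoly S q n g) :
    IsDiffPoly S q n (fun t => f t + g t) := by
  obtain ⟨P, hP⟩ := hf
  obtain ⟨R, hR⟩ := hg
  exact ⟨P + R, fun t ht => by simp [hP t ht, hR t ht]⟩

lemma IsDiffPoly.sub (hf : IsDiffPoly S q n f) (hg : IsDiffPoly S q n g) :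
    IsDiffPoly S q n (fun t => f t - g t) := by
  obtain ⟨P, hP⟩ := hf
  obtain ⟨R, hR⟩ := hg
  exact ⟨P - R, fun t ht => by simp [hP t ht, hR t ht]⟩

lemma IsDiffPoly.mul (hf : IsDiffPoly S q n f) (hg : IsDiffPoly S q n g) :
    IsDiffPoly S q n (fun t => f t * g t) := by
  obtain ⟨P, hP⟩ := hf
  obtain ⟨R, hR⟩ := hg
  exact ⟨P * R, fun t ht => by simp [hP t ht, hR t ht]⟩

lemma isDiffPoly_const (c : ℝ) : IsDiffPoly S q n (fun _ => c) :=
  ⟨MvPolynomial.C c, fun t _ => by simp⟩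

lemma isDiffPoly_iteratedDerivWithin {l : ℕ} (h : l < n) :
    IsDiffPoly S q n (iteratedDerivWithin l q S) :=
  ⟨MvPolynomial.X ⟨l, h⟩, fun t _ => by simp⟩

/-- Differentiating a differential polynomial raises the order by one: each `q^{(l)}` that occurs
is differentiable with derivative `q^{(l+1)}`. -/
lemma IsDiffPoly.derivWithin (hS : UniqueDiffOn ℝ S) (hq : ContDiffOn ℝ n q S)
    (hf : IsDiffPoly S q n f) : IsDiffPoly S q (n + 1) (derivWithin f S) := by
  obtain ⟨P, hP⟩ := hf
  have key : ∃ g, IsDiffPoly S q (n + 1) g ∧ ∀ t ∈ S, HasDerivWithinAt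
      (fun s => MvPolynomial.eval (fun l : Fin n => iteratedDerivWithin (l : ℕ) q S s) P)
      (g t) S t := by
    clear hP
    induction P using MvPolynomial.induction_on with
    | C a =>
      refine ⟨fun _ => 0, isDiffPoly_const 0, fun t _ => ?_⟩
      simpa using hasDerivWithinAt_const t S a
    | add p r hp hr =>
      obtain ⟨g₁, h₁, d₁⟩ := hp
      obtain ⟨g₂, h₂, d₂⟩ := hr
      refine ⟨_, h₁.add h₂, fun t ht => ?_⟩
      simpa only [map_add] using (d₁ t ht).fun_add (d₂ t ht)
    | mul_X p i hp =>
      obtain ⟨g₁, h₁, d₁⟩ := hp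
      have hp' : IsDiffPoly S q (n + 1) (fun s =>
          MvPolynomial.eval (fun l : Fin n => iteratedDerivWithin (l : ℕ) q S s) p) :=
        IsDiffPoly.mono ⟨p, fun _ _ => rfl⟩ n.le_succ
      refine ⟨_, (h₁.mul (isDiffPoly_iteratedDerivWithin (l := i) (by omega))).add
        (hp'.mul (isDiffPoly_iteratedDerivWithin (l := (i : ℕ) + 1) (by omega))),
        fun t ht => ?_⟩
      have hi : HasDerivWithinAt (iteratedDerivWithin (i : ℕ) q S)
          (iteratedDerivWithin ((i : ℕ) + 1) q S t) S t := by
        rw [iteratedDerivWithin_succ]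
        exact (hq.differentiableOn_iteratedDerivWithin (by exact_mod_cast i.2) hS t
          ht).hasDerivWithinAt
      simpa only [map_mul, MvPolynomial.eval_X] using (d₁ t ht).fun_mul hi
  obtain ⟨g, hg, hd⟩ := key
  refine hg.congr fun t ht => ?_
  exact ((hd t ht).congr hP (hP t ht)).derivWithin (hS t ht)

lemma IsDiffPoly.hasDiffPolyPrimitive (hf : IsDiffPoly S q n f)
    (h : ∀ t ∈ S, HasDerivWithinAt f (g t) S t) : HasDiffPolyPrimitive S q n g := by
  obtain ⟨P, hP⟩ := hf
  exact ⟨P, fun t ht =>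
    (h t ht).congr (fun s hs => (hP s hs).symm) (hP t ht).symm⟩

lemma HasDiffPolyPrimitive.congr (hf : HasDiffPolyPrimitive S q n f) (h : ∀ t ∈ S, g t = f t) :
    HasDiffPolyPrimitive S q n g := by
  obtain ⟨P, hP⟩ := hf
  exact ⟨P, fun t ht => (h t ht) ▸ hP t ht⟩

lemma HasDiffPolyPrimitive.linComb (a b : ℝ) (hf : HasDiffPolyPrimitive S q n f)
    (hg : HasDiffPolyPrimitive S q n g) :
    HasDiffPolyPrimitive S q n (fun t => a * f t + b * g t) := by
  obtain ⟨P, hP⟩ := hf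
  obtain ⟨R, hR⟩ := hg
  refine ⟨MvPolynomial.C a * P + MvPolynomial.C b * R, fun t ht => ?_⟩
  simpa only [map_add, map_mul, MvPolynomial.eval_C] using
    ((hP t ht).const_mul a).fun_add ((hR t ht).const_mul b)

/-- A `C^3` function has honest first, second and third derivatives within `S`. -/
lemma hasDerivWithinAt_chain (hS : UniqueDiffOn ℝ S) (hf : ContDiffOn ℝ 3 f S) :
    ∀ t ∈ S, ∀ i < 3, HasDerivWithinAt (iteratedDerivWithin i f S)
      (iteratedDerivWithin (i + 1) f S t) S t := by
  intro t ht i hi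
  rw [iteratedDerivWithin_succ]
  exact (hf.differentiableOn_iteratedDerivWithin (by exact_mod_cast hi) hS t ht).hasDerivWithinAt

/-- Integration by parts three times: `f g'' - f' g' + f'' g` is a primitive of
`f g''' + f''' g`. -/
lemma hasDiffPolyPrimitive_parts (hS : UniqueDiffOn ℝ S) (hq : ContDiffOn ℝ (n + 1 : ℕ) q S)
    (hf : ContDiffOn ℝ 3 f S) (hg : ContDiffOn ℝ 3 g S)
    (pf : IsDiffPoly S q n f) (pg : IsDiffPoly S q n g) :
    HasDiffPolyPrimitive S q (n + 2)
      (fun t => f t * iteratedDerivWithin 3 g S t + iteratedDerivWithin 3 f S t * g t) := by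
  have hqn : ContDiffOn ℝ n q S := hq.of_le (by exact_mod_cast n.le_succ)
  have p1 : ∀ u, IsDiffPoly S q n u → IsDiffPoly S q (n + 1) (iteratedDerivWithin 1 u S) := by
    intro u hu
    exact (hu.derivWithin hS hqn).congr fun t ht => by rw [iteratedDerivWithin_one]
  have p2 : ∀ u, IsDiffPoly S q n u → IsDiffPoly S q (n + 2) (iteratedDerivWithin 2 u S) := by
    intro u hu
    exact ((p1 u hu).derivWithin hS hq).congr fun t ht => by rw [iteratedDerivWithin_succ]
  have pF : IsDiffPoly S q (n + 2) (fun t =>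
      (f t * iteratedDerivWithin 2 g S t
        - iteratedDerivWithin 1 f S t * iteratedDerivWithin 1 g S t)
        + iteratedDerivWithin 2 f S t * g t) :=
    ((((pf.mono (by omega)).mul (p2 g pg)).sub
      (((p1 f pf).mono (by omega)).mul ((p1 g pg).mono (by omega)))).add
      ((p2 f pf).mul (pg.mono (by omega))))
  refine pF.hasDiffPolyPrimitive fun t ht => ?_
  have cf := hasDerivWithinAt_chain hS hf t ht
  have cg := hasDerivWithinAt_chain hS hg t ht
  have f0 := cf 0 (by omega)
  have g0 := cg 0 (by omega)
  rw [iteratedDerivWithin_zero] at f0 g0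
  refine (((f0.fun_mul (cg 2 (by omega))).fun_sub
    ((cf 1 (by omega)).fun_mul (cg 1 (by omega)))).fun_add
    ((cf 2 (by omega)).fun_mul g0)).congr_deriv ?_
  norm_num
  ring

end DiffPoly

/-- if `G_0, …, G_j` are `q` times polynomials in `q` and its derivatives,
then some primitive of `G_1·G_j'''` on `[0,T)` is a polynomial expression in
`q, q', …, q^{(2j+2)}`. -/
theorem primitive_G1_Gj_polynomial
    (T : ℝ) (hT : 0 < T) (k : ℕ) (hk : 3 ≤ k)
    (q : ℝ → ℝ)
    (hq : ContDiffOn ℝ (2 * k - 2 : ℕ) q (Ico (0:ℝ) T))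
    (hq0 : ∀ t ∈ Ico (0:ℝ) T, q t ≠ 0)
    (C₀ : ℝ) (hC₀ : C₀ ≠ 0)
    (G : ℕ → ℝ → ℝ)
    (hGreg : ∀ i ≤ k - 2, ContDiffOn ℝ (2 * k - 2 * i - 2 : ℕ) (G i) (Ico (0:ℝ) T))
    (hG0 : ∀ t ∈ Ico (0:ℝ) T, G 0 t = C₀ * q t)
    (hGrec : ∀ i, 1 ≤ i → i ≤ k - 2 → ∀ t ∈ Ico (0:ℝ) T,
      derivWithin (fun s => G i s / q s) (Ico (0:ℝ) T) t
        = -(1/4) * q t * iteratedDerivWithin 3 (G (i - 1)) (Ico (0:ℝ) T) t)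
    (hk4 : 4 ≤ k) (j : ℕ) (hj1 : 1 ≤ j) (hjk : j ≤ k - 3)
    (hpoly : ∀ i ≤ j, ∃ P : MvPolynomial (Fin (2 * i + 1)) ℝ,
      ∀ t ∈ Ico (0:ℝ) T,
        G i t = q t * MvPolynomial.eval
          (fun l : Fin (2 * i + 1) => iteratedDerivWithin (l : ℕ) q (Ico (0:ℝ) T) t) P) :
    ∃ Q : MvPolynomial (Fin (2 * j + 3)) ℝ,
      ∀ t ∈ Ico (0:ℝ) T,
        HasDerivWithinAt
          (fun s => MvPolynomial.eval
            (fun l : Fin (2 * j + 3) => iteratedDerivWithin (l : ℕ) q (Ico (0:ℝ) T) s) Q)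
          (G 1 t * iteratedDerivWithin 3 (G j) (Ico (0:ℝ) T) t)
          (Ico (0:ℝ) T) t := by
  have hS : UniqueDiffOn ℝ (Ico (0:ℝ) T) := uniqueDiffOn_Ico 0 T
  have hpoly' : ∀ i ≤ j, IsDiffPoly (Ico (0:ℝ) T) q (2 * j + 1) (fun t => G i t / q t) := by
    intro i hi
    obtain ⟨P, hP⟩ := hpoly i hi
    refine IsDiffPoly.mono ⟨P, fun t ht => ?_⟩ (by omega : 2 * i + 1 ≤ 2 * j + 1)
    have := hq0 t ht
    simp only [hP t ht]
    field_simp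
  have hqpoly : IsDiffPoly (Ico (0:ℝ) T) q (2 * j + 1) q :=
    (isDiffPoly_iteratedDerivWithin (l := 0) (by omega)).congr fun t _ => by simp
  have hGpoly : ∀ i ≤ j, IsDiffPoly (Ico (0:ℝ) T) q (2 * j + 1) (G i) := by
    intro i hi
    refine (hqpoly.mul (hpoly' i hi)).congr fun t ht => ?_
    have := hq0 t ht
    field_simp
  have hG3 : ∀ i ≤ j, ContDiffOn ℝ 3 (G i) (Ico (0:ℝ) T) := fun i hi =>
    (hGreg i (by omega)).of_le (by exact_mod_cast (by omega : 3 ≤ 2 * k - 2 * i - 2))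
  have hqn : ContDiffOn ℝ (2 * j + 1 + 1 : ℕ) q (Ico (0:ℝ) T) :=
    hq.of_le (by exact_mod_cast (by omega : 2 * j + 1 + 1 ≤ 2 * k - 2))
  have hA : ∀ a ≤ j, ∀ b ≤ j, HasDiffPolyPrimitive (Ico (0:ℝ) T) q (2 * j + 3)
      (fun t => G a t * iteratedDerivWithin 3 (G b) (Ico (0:ℝ) T) t
        + iteratedDerivWithin 3 (G a) (Ico (0:ℝ) T) t * G b t) := fun a ha b hb =>
    hasDiffPolyPrimitive_parts hS hqn (hG3 a ha) (hG3 b hb) (hGpoly a ha) (hGpoly b hb)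
  have hH : ∀ i, 1 ≤ i → i ≤ j → ∀ t ∈ Ico (0:ℝ) T, HasDerivWithinAt (fun s => G i s / q s)
      (-(1/4) * q t * iteratedDerivWithin 3 (G (i - 1)) (Ico (0:ℝ) T) t) (Ico (0:ℝ) T) t := by
    intro i hi hij t ht
    rw [← hGrec i hi (by omega) t ht]
    have dG := (hG3 i hij).differentiableOn (by norm_num) t ht
    have dq := hqn.differentiableOn (by norm_cast) t ht
    exact (dG.fun_div dq (hq0 t ht)).hasDerivWithinAt
  have hB : ∀ a b, a + 1 ≤ j → b + 1 ≤ j → HasDiffPolyPrimitive (Ico (0:ℝ) T) q (2 * j + 3)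
      (fun t => -(1/4) * (iteratedDerivWithin 3 (G a) (Ico (0:ℝ) T) t * G (b + 1) t
        + G (a + 1) t * iteratedDerivWithin 3 (G b) (Ico (0:ℝ) T) t)) := by
    intro a b ha hb
    refine (((hpoly' (a + 1) ha).mul (hpoly' (b + 1) hb)).mono
      (by omega : 2 * j + 1 ≤ 2 * j + 3)).hasDiffPolyPrimitive fun t ht => ?_
    refine ((hH (a + 1) (by omega) ha t ht).fun_mul
      (hH (b + 1) (by omega) hb t ht)).congr_deriv ?_
    have := hq0 t ht
    simp only [Nat.add_sub_cancel]
    field_simp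
    ring
  have htel : ∀ m, m + 1 ≤ j → HasDiffPolyPrimitive (Ico (0:ℝ) T) q (2 * j + 3)
      (fun t => G 1 t * iteratedDerivWithin 3 (G j) (Ico (0:ℝ) T) t
        - G (m + 1) t * iteratedDerivWithin 3 (G (j - m)) (Ico (0:ℝ) T) t) := by
    intro m
    induction m with
    | zero =>
      intro _
      exact ((isDiffPoly_const 0).hasDiffPolyPrimitive
        fun t _ => hasDerivWithinAt_const t _ _).congr fun t _ => by simp
    | succ m ih =>
      intro hm
      obtain ⟨b, hb⟩ : ∃ b, j - m = b + 1 := ⟨j - m - 1, by omega⟩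
      have hb' : j - (m + 1) = b := by omega
      have h1 := ih (by omega)
      rw [hb] at h1
      rw [hb']
      have h2 := (hA (m + 1) (by omega) (b + 1) (by omega)).linComb 1 4
        (hB (m + 1) b (by omega) (by omega))
      exact (h1.linComb 1 1 h2).congr fun t _ => by ring
  have h1 := htel (j - 1) (by omega)
  rw [Nat.sub_add_cancel hj1, (by omega : j - (j - 1) = 1)] at h1
  exact (h1.linComb (1/2) (1/2) (hA 1 hj1 j le_rfl)).congr fun t _ => by ring
end

section
/- Assume moreover k ≥ 4. Then there exists a constant c ∈ ℝ such that for all t ∈ [0,T): G_2(t) = −(q(t)/4)·[ q(t)·G_1''(t) − q'(t)·G_1'(t) + q''(t)·G_1(t) + (2/C₀)·(G_1(t)/q(t))² + c ]. -/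
/-!
Write `F = q G₁'' − q' G₁' + q'' G₁ + (2/C₀)(G₁/q)²`. Differentiating, the terms `q' G₁''` and
`q'' G₁'` cancel, and the recursion for `i = 1`, which reads `(G₁/q)' = −(C₀/4) q q'''`, turns the
derivative of the square into `−q''' G₁`. Hence `F' = q G₁'''`, so the recursion for `i = 2` says
`(G₂/q + F/4)' = 0` on `[0,T)`, and `G₂/q + F/4` is constant there.
-/

open Set

lemma hasDerivWithinAt_iteratedDerivWithin {s : Set ℝ} (hs : UniqueDiffOn ℝ s) {f : ℝ → ℝ}
    {n : ℕ} (hf : ContDiffOn ℝ n f s) {j : ℕ} (hj : j < n) {t : ℝ} (ht : t ∈ s) :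
    HasDerivWithinAt (iteratedDerivWithin j f s) (iteratedDerivWithin (j + 1) f s t) s t := by
  rw [iteratedDerivWithin_succ]
  exact (hf.differentiableOn_iteratedDerivWithin (by exact_mod_cast hj) hs t ht).hasDerivWithinAt

/-- explicit formula for `G₂`:
`G₂ = −(q/4)[q G₁'' − q' G₁' + q'' G₁ + (2/C₀)(G₁/q)² + c]` on `[0,T)`. -/
theorem G2_explicit_formula
    (T : ℝ) (hT : 0 < T) (k : ℕ) (hk : 3 ≤ k)
    (q : ℝ → ℝ)
    (hq : ContDiffOn ℝ (2 * k - 2 : ℕ) q (Ico (0:ℝ) T))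
    (hq0 : ∀ t ∈ Ico (0:ℝ) T, q t ≠ 0)
    (C₀ : ℝ) (hC₀ : C₀ ≠ 0)
    (G : ℕ → ℝ → ℝ)
    (hGreg : ∀ i ≤ k - 2, ContDiffOn ℝ (2 * k - 2 * i - 2 : ℕ) (G i) (Ico (0:ℝ) T))
    (hG0 : ∀ t ∈ Ico (0:ℝ) T, G 0 t = C₀ * q t)
    (hGrec : ∀ i, 1 ≤ i → i ≤ k - 2 → ∀ t ∈ Ico (0:ℝ) T,
      derivWithin (fun s => G i s / q s) (Ico (0:ℝ) T) t
        = -(1/4) * q t * iteratedDerivWithin 3 (G (i - 1)) (Ico (0:ℝ) T) t)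
    (hk4 : 4 ≤ k) :
    ∃ c : ℝ, ∀ t ∈ Ico (0:ℝ) T,
      G 2 t = -(q t / 4) *
        (q t * iteratedDerivWithin 2 (G 1) (Ico (0:ℝ) T) t
          - derivWithin q (Ico (0:ℝ) T) t * derivWithin (G 1) (Ico (0:ℝ) T) t
          + iteratedDerivWithin 2 q (Ico (0:ℝ) T) t * G 1 t
          + (2 / C₀) * (G 1 t / q t) ^ 2
          + c) := by
  have hs : UniqueDiffOn ℝ (Ico (0:ℝ) T) := uniqueDiffOn_Ico 0 T
  have hG1 := hGreg 1 (by omega)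
  have hG2 := hGreg 2 (by omega)
  set s := Ico (0:ℝ) T with hsdef
  have h3 : ∀ t ∈ s, iteratedDerivWithin 3 (G 0) s t = C₀ * iteratedDerivWithin 3 q s t := by
    intro t ht
    rw [iteratedDerivWithin_congr (g := fun z => C₀ * q z) hG0 ht]
    exact iteratedDerivWithin_const_mul ht hs C₀
      ((hq.of_le (by exact_mod_cast (by omega : 3 ≤ 2 * k - 2))) t ht)
  have hq_ : ∀ t ∈ s, HasDerivWithinAt q (derivWithin q s t) s t := fun t ht => by
    simpa using hasDerivWithinAt_iteratedDerivWithin hs hq (j := 0) (by omega) ht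
  have hq1 : ∀ t ∈ s, HasDerivWithinAt (derivWithin q s) (iteratedDerivWithin 2 q s t) s t :=
    fun t ht => by
      simpa [iteratedDerivWithin_one] using
        hasDerivWithinAt_iteratedDerivWithin hs hq (j := 1) (by omega) ht
  have hq2 : ∀ t ∈ s,
      HasDerivWithinAt (iteratedDerivWithin 2 q s) (iteratedDerivWithin 3 q s t) s t :=
    fun t ht => hasDerivWithinAt_iteratedDerivWithin hs hq (j := 2) (by omega) ht
  have hg_ : ∀ t ∈ s, HasDerivWithinAt (G 1) (derivWithin (G 1) s t) s t := fun t ht => by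
    simpa using hasDerivWithinAt_iteratedDerivWithin hs hG1 (j := 0) (by omega) ht
  have hg1 : ∀ t ∈ s,
      HasDerivWithinAt (derivWithin (G 1) s) (iteratedDerivWithin 2 (G 1) s t) s t :=
    fun t ht => by
      simpa [iteratedDerivWithin_one] using
        hasDerivWithinAt_iteratedDerivWithin hs hG1 (j := 1) (by omega) ht
  have hg2 : ∀ t ∈ s,
      HasDerivWithinAt (iteratedDerivWithin 2 (G 1) s) (iteratedDerivWithin 3 (G 1) s t) s t :=
    fun t ht => hasDerivWithinAt_iteratedDerivWithin hs hG1 (j := 2) (by omega) ht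
  have hr1 : ∀ t ∈ s, HasDerivWithinAt (fun z => G 1 z / q z)
      (-(1/4) * q t * (C₀ * iteratedDerivWithin 3 q s t)) s t := by
    intro t ht
    rw [← h3 t ht, ← hGrec 1 le_rfl (by omega) t ht]
    exact ((hg_ t ht).differentiableWithinAt.div (hq_ t ht).differentiableWithinAt
      (hq0 t ht)).hasDerivWithinAt
  have hr2 : ∀ t ∈ s, HasDerivWithinAt (fun z => G 2 z / q z)
      (-(1/4) * q t * iteratedDerivWithin 3 (G 1) s t) s t := by
    intro t ht
    rw [← hGrec 2 (by omega) (by omega) t ht]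
    have hd : DifferentiableWithinAt ℝ (G 2) s t :=
      hG2.differentiableOn (by exact_mod_cast (by omega : 2 * k - 2 * 2 - 2 ≠ 0)) t ht
    exact (hd.div (hq_ t ht).differentiableWithinAt (hq0 t ht)).hasDerivWithinAt
  -- `F` is the bracket in the formula without its constant; `H` is the conserved quantity.
  let F : ℝ → ℝ := fun t => q t * iteratedDerivWithin 2 (G 1) s t
    - derivWithin q s t * derivWithin (G 1) s t
    + iteratedDerivWithin 2 q s t * G 1 t + (2 / C₀) * (G 1 t / q t) ^ 2
  let H : ℝ → ℝ := fun t => G 2 t / q t + (1/4) * F t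
  have hF : ∀ t ∈ s, HasDerivWithinAt F (q t * iteratedDerivWithin 3 (G 1) s t) s t := by
    intro t ht
    have h := ((((hq_ t ht).mul (hg2 t ht)).sub ((hq1 t ht).mul (hg1 t ht))).add
      ((hq2 t ht).mul (hg_ t ht))).add (((hr1 t ht).pow 2).const_mul (2 / C₀))
    refine h.congr_deriv ?_
    have := hq0 t ht
    simp only [Nat.add_one_sub_one, pow_one, Nat.cast_ofNat]
    field_simp
    ring
  have hH : ∀ t ∈ s, HasDerivWithinAt H 0 s t := fun t ht =>
    ((hr2 t ht).add ((hF t ht).const_mul (1/4))).congr_deriv (by ring)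
  have h0 : (0:ℝ) ∈ s := ⟨le_rfl, hT⟩
  have hconst : ∀ t ∈ s, H t = H 0 := by
    intro t ht
    have h := (convex_Ico (0:ℝ) T).norm_image_sub_le_of_norm_hasDerivWithin_le
      (C := 0) hH (by simp) h0 ht
    rw [zero_mul] at h
    exact sub_eq_zero.mp (norm_le_zero_iff.mp h)
  refine ⟨-4 * H 0, fun t ht => ?_⟩
  have hqt := hq0 t ht
  have h1 : G 2 t = q t * (G 2 t / q t) := by field_simp
  have h2 : G 2 t / q t + (1/4) * F t = H 0 := hconst t ht
  have h4 : G 2 t = -(q t / 4) * (F t + -4 * H 0) := by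
    rw [h1]
    linear_combination q t * h2
  exact h4
end
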